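/- There exist constants C > 0 and δ > 0 such that for all integers N ≥ 1, all t ∈ [0,1], and all α with 0 < α ≤ N^{−3/4}: α·∫_{1/(α·N^{2/3})}^{1/α−1} e^{−N·α·𝓕_{t,α}(y)} dy ≤ C·e^{−δ·N^{1/3}}·Q_t^N(α), and the same bound holds with 𝓕_{P,α} and Q_P^N(α) in place of 𝓕_{t,α} and Q_t^N(α). -/

import Mathlib

open Set Filter

noncomputable def GP : ℝ → ℝ := fun x => x * Real.log x + (1 - x) * Real.log (1 - x)

noncomputable def Gt (f0 f1 : ℝ → ℝ) (t : ℝ) : ℝ → ℝ :=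
  fun x => GP x + ((1 - t) * f0 x + t * f1 x)

noncomputable def Phase (G : ℝ → ℝ) (α : ℝ) : ℝ → ℝ :=
  fun x => (x - α) * deriv G x - (G x - G α)

noncomputable def Qnorm (G : ℝ → ℝ) (N : ℕ) (α : ℝ) : ℝ :=
  2 * Real.pi * ∫ x in (0:ℝ)..1, Real.exp (-(N : ℝ) * Phase G α x)

noncomputable def RPhase (G : ℝ → ℝ) (α : ℝ) : ℝ → ℝ :=
  fun y => (1 / α) * Phase G α (α * (1 + y))

noncomputable def Leg (G : ℝ → ℝ) (S : Set ℝ) : ℝ → ℝ :=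
  fun ρ => sSup ((fun x => x * ρ - G x) '' S)

noncomputable def QQ (G : ℝ → ℝ) (N : ℕ) (α : ℝ) : ℝ :=
  Qnorm G N α * Real.exp ((N : ℝ) * G α)

lemma phase_hasDerivAt (G G1 G2 : ℝ → ℝ)
    (h1 : ∀ x ∈ Ioo (0:ℝ) 1, HasDerivAt G (G1 x) x)
    (h2 : ∀ x ∈ Ioo (0:ℝ) 1, HasDerivAt G1 (G2 x) x) (α x : ℝ) (hx : x ∈ Ioo (0:ℝ) 1) :
    HasDerivAt (Phase G α) ((x - α) * G2 x) x := by
  have e : (fun x => (x - α) * G1 x - (G x - G α)) =ᶠ[nhds x] Phase G α := by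
    filter_upwards [isOpen_Ioo.mem_nhds hx] with y hy
    simp only [Phase, (h1 y hy).deriv]
  have d := (((hasDerivAt_id x).sub_const α).mul (h2 x hx)).sub ((h1 x hx).sub_const (G α))
  refine HasDerivAt.congr_of_eventuallyEq ?_ e.symm
  refine HasDerivAt.congr_deriv (d) ?_
  simp

lemma phase_self (G : ℝ → ℝ) (α : ℝ) : Phase G α α = 0 := by simp [Phase]

lemma phase_lower (G G1 G2 : ℝ → ℝ)
    (h1 : ∀ x ∈ Ioo (0:ℝ) 1, HasDerivAt G (G1 x) x)
    (h2 : ∀ x ∈ Ioo (0:ℝ) 1, HasDerivAt G1 (G2 x) x) (c : ℝ) (hc : 0 < c)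
    (hlo : ∀ x ∈ Ioo (0:ℝ) 1, c / x ≤ G2 x)
    (α x : ℝ) (ha : 0 < α) (hax : α ≤ x) (hx1 : x < 1) :
    c * ((x - α) ^ 2 / (2 * x)) ≤ Phase G α x := by
  have hd : ∀ y ∈ Icc α x, HasDerivAt (fun y => Phase G α y - c * ((y - α) ^ 2 / (2 * y)))
      ((y - α) * G2 y - c * ((2 * (y - α) * (2 * y) - (y - α) ^ 2 * 2) / (2 * y) ^ 2)) y := by
    intro y hy
    have hy0 : 0 < y := ha.trans_le hy.1
    have p := phase_hasDerivAt G G1 G2 h1 h2 α y ⟨hy0, hy.2.trans_lt hx1⟩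
    have q := ((((hasDerivAt_id y).sub_const α).pow 2).div ((hasDerivAt_id y).const_mul 2)
      (by simpa using hy0.ne')).const_mul c
    refine HasDerivAt.congr_deriv (p.sub q) ?_
    simp
  have hm : MonotoneOn (fun y => Phase G α y - c * ((y - α) ^ 2 / (2 * y))) (Icc α x) := by
    apply monotoneOn_of_deriv_nonneg (convex_Icc _ _)
    · exact fun y hy => (hd y hy).continuousAt.continuousWithinAt
    · intro y hy
      exact (hd y (interior_subset hy)).differentiableAt.differentiableWithinAt
    · intro y hy
      have hy := interior_subset hy
      rw [(hd y hy).deriv]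
      have hy0 : 0 < y := ha.trans_le hy.1
      have l := hlo y ⟨hy0, hy.2.trans_lt hx1⟩
      have s : 0 ≤ y - α := sub_nonneg.2 hy.1
      have l2 := mul_le_mul_of_nonneg_left l s
      have e : c * ((2 * (y - α) * (2 * y) - (y - α) ^ 2 * 2) / (2 * y) ^ 2)
        = (y - α) * (c / y) - c * ((y - α) ^ 2 / (2 * y ^ 2)) := by
        field_simp
      have : 0 ≤ c * ((y - α) ^ 2 / (2 * y ^ 2)) := by positivity
      linarith
  have := hm (left_mem_Icc.2 hax) (right_mem_Icc.2 hax) hax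
  simp only [phase_self, sub_self] at this
  simp at this
  linarith

lemma phase_upper (G G1 G2 : ℝ → ℝ)
    (h1 : ∀ x ∈ Ioo (0:ℝ) 1, HasDerivAt G (G1 x) x)
    (h2 : ∀ x ∈ Ioo (0:ℝ) 1, HasDerivAt G1 (G2 x) x) (K : ℝ) (hK : 0 < K)
    (hhi : ∀ x ∈ Ioo (0:ℝ) 1, G2 x ≤ K / (x * (1 - x)))
    (α x : ℝ) (ha : 0 < α) (hax : α ≤ x) (hx1 : x ≤ 3 / 4) :
    Phase G α x ≤ 4 * K * (x - α) := by
  have hd : ∀ y ∈ Icc α x, HasDerivAt (fun y => 4 * K * (y - α) - Phase G α y)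
      (4 * K - (y - α) * G2 y) y := by
    intro y hy
    have hy0 : 0 < y := ha.trans_le hy.1
    have p := phase_hasDerivAt G G1 G2 h1 h2 α y ⟨hy0, by linarith [hy.2]⟩
    have q := ((hasDerivAt_id y).sub_const α).const_mul (4 * K)
    refine HasDerivAt.congr_deriv (q.sub p) ?_
    simp
  have hm : MonotoneOn (fun y => 4 * K * (y - α) - Phase G α y) (Icc α x) := by
    apply monotoneOn_of_deriv_nonneg (convex_Icc _ _)
    · exact fun y hy => (hd y hy).continuousAt.continuousWithinAt
    · intro y hy
      exact (hd y (interior_subset hy)).differentiableAt.differentiableWithinAt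
    · intro y hy
      have hy := interior_subset hy
      rw [(hd y hy).deriv]
      have hy0 : 0 < y := ha.trans_le hy.1
      have hy1 : 1 / 4 ≤ 1 - y := by linarith [hy.2]
      have l := hhi y ⟨hy0, by linarith⟩
      have s : 0 ≤ y - α := sub_nonneg.2 hy.1
      have l2 := mul_le_mul_of_nonneg_left l s
      have e : (y - α) * (K / (y * (1 - y))) ≤ 4 * K := by
        rw [mul_div_assoc', div_le_iff₀ (by positivity)]
        have : y * (1/4) ≤ y * (1 - y) := mul_le_mul_of_nonneg_left hy1 hy0.le
        nlinarith
      linarith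
  have := hm (left_mem_Icc.2 hax) (right_mem_Icc.2 hax) hax
  simp only [phase_self, sub_self] at this
  simp at this
  linarith

lemma phase_nonneg (G G1 G2 : ℝ → ℝ)
    (h1 : ∀ x ∈ Ioo (0:ℝ) 1, HasDerivAt G (G1 x) x)
    (h2 : ∀ x ∈ Ioo (0:ℝ) 1, HasDerivAt G1 (G2 x) x) (c : ℝ) (hc : 0 < c)
    (hlo : ∀ x ∈ Ioo (0:ℝ) 1, c / x ≤ G2 x)
    (α x : ℝ) (ha : 0 < α) (ha1 : α < 1) (hx0 : 0 < x) (hx1 : x < 1) :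
    0 ≤ Phase G α x := by
  rcases le_total α x with hax | hax
  · refine le_trans ?_ (phase_lower G G1 G2 h1 h2 c hc hlo α x ha hax hx1)
    positivity
  · have hd : ∀ y ∈ Icc x α, HasDerivAt (Phase G α) ((y - α) * G2 y) y := fun y hy =>
      phase_hasDerivAt G G1 G2 h1 h2 α y ⟨hx0.trans_le hy.1, hy.2.trans_lt ha1⟩
    have hm : AntitoneOn (Phase G α) (Icc x α) := by
      apply antitoneOn_of_deriv_nonpos (convex_Icc _ _)
      · exact fun y hy => (hd y hy).continuousAt.continuousWithinAt
      · intro y hy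
        exact (hd y (interior_subset hy)).differentiableAt.differentiableWithinAt
      · intro y hy
        have hy := interior_subset hy
        rw [(hd y hy).deriv]
        have hy0 : 0 < y := hx0.trans_le hy.1
        have l := hlo y ⟨hy0, hy.2.trans_lt ha1⟩
        have : 0 < c / y := by positivity
        exact mul_nonpos_of_nonpos_of_nonneg (sub_nonpos.2 hy.2) (by linarith)
    have := hm (left_mem_Icc.2 hax) (right_mem_Icc.2 hax) hax
    rwa [phase_self] at this

lemma Q_nonneg (G : ℝ → ℝ) (N : ℕ) (α : ℝ) : 0 ≤ Qnorm G N α := by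
  unfold Qnorm
  have : 0 ≤ ∫ x in (0:ℝ)..1, Real.exp (-(N : ℝ) * Phase G α x) :=
    intervalIntegral.integral_nonneg zero_le_one fun _ _ => (Real.exp_pos _).le
  have := Real.pi_pos
  positivity

lemma Q_lower (G G1 G2 : ℝ → ℝ)
    (h1 : ∀ x ∈ Ioo (0:ℝ) 1, HasDerivAt G (G1 x) x)
    (h2 : ∀ x ∈ Ioo (0:ℝ) 1, HasDerivAt G1 (G2 x) x) (c K : ℝ) (hc : 0 < c) (hK : 0 < K)
    (hlo : ∀ x ∈ Ioo (0:ℝ) 1, c / x ≤ G2 x)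
    (hhi : ∀ x ∈ Ioo (0:ℝ) 1, G2 x ≤ K / (x * (1 - x)))
    (N : ℕ) (hN : 2 ≤ N) (α : ℝ) (ha : 0 < α) (ha1 : α ≤ 3 / 5) :
    Real.exp (-K) / (4 * N) ≤ Qnorm G N α := by
  have hN' : (2:ℝ) ≤ N := by exact_mod_cast hN
  set F : ℝ → ℝ := fun x => Real.exp (-(N : ℝ) * Phase G α x) with hF
  have hq : 1 / (4 * (N:ℝ)) ≤ 1 / 8 := by
    apply one_div_le_one_div_of_le <;> linarith
  have hq0 : 0 < 1 / (4 * (N:ℝ)) := by positivity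
  have hcont : ContinuousOn F (Ioo 0 1) := by
    intro x hx
    have := (phase_hasDerivAt G G1 G2 h1 h2 α x hx).continuousAt
    exact (Real.continuous_exp.continuousAt.comp (this.const_mul _)).continuousWithinAt
  have hint : MeasureTheory.IntegrableOn F (Ioo 0 1) := by
    refine MeasureTheory.IntegrableOn.of_bound (C := 1) (by simp)
      (hcont.aestronglyMeasurable measurableSet_Ioo) ?_
    filter_upwards [MeasureTheory.ae_restrict_mem measurableSet_Ioo] with x hx
    rw [Real.norm_of_nonneg (Real.exp_pos _).le]
    apply Real.exp_le_one_iff.2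
    have := phase_nonneg G G1 G2 h1 h2 c hc hlo α x ha (by linarith) hx.1 hx.2
    have : 0 ≤ (N:ℝ) * Phase G α x := by positivity
    linarith
  have hii : IntervalIntegrable F MeasureTheory.volume 0 1 := by
    rw [intervalIntegrable_iff_integrableOn_Ioo_of_le zero_le_one]
    exact hint
  have hii2 : IntervalIntegrable F MeasureTheory.volume α (α + 1 / (4 * N)) := by
    apply hii.mono_set
    rw [uIcc_of_le (by linarith), uIcc_of_le zero_le_one]
    exact Icc_subset_Icc ha.le (by linarith)
  have s1 : ∫ x in α..(α + 1 / (4 * N)), F x ≤ ∫ x in (0:ℝ)..1, F x := by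
    apply intervalIntegral.integral_mono_interval ha.le (by linarith) (by linarith) _ hii
    exact Eventually.of_forall fun x => (Real.exp_pos _).le
  have s2 : ∫ x in α..(α + 1 / (4 * N)), Real.exp (-K) ≤ ∫ x in α..(α + 1 / (4 * N)), F x := by
    apply intervalIntegral.integral_mono_on (by linarith) (by simp) hii2
    intro x hx
    apply Real.exp_le_exp.2
    have u := phase_upper G G1 G2 h1 h2 K hK hhi α x ha hx.1 (by linarith [hx.2])
    have u2 : 4 * K * (x - α) ≤ 4 * K * (1 / (4 * N)) := by
      apply mul_le_mul_of_nonneg_left _ (by positivity)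
      linarith [hx.2]
    have u3 : (N:ℝ) * Phase G α x ≤ N * (4 * K * (1 / (4 * N))) :=
      mul_le_mul_of_nonneg_left (u.trans u2) (by positivity)
    have : (N:ℝ) * (4 * K * (1 / (4 * N))) = K := by field_simp
    linarith
  rw [intervalIntegral.integral_const] at s2
  simp only [add_sub_cancel_left, smul_eq_mul] at s2
  have hi : Real.exp (-K) / (4 * N) ≤ ∫ x in (0:ℝ)..1, F x := by
    calc _ = 1 / (4 * (N:ℝ)) * Real.exp (-K) := by ring
      _ ≤ _ := s2.trans s1
  have h0 : 0 ≤ ∫ x in (0:ℝ)..1, F x := le_trans (by positivity) hi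
  unfold Qnorm
  have := Real.pi_gt_three
  change _ ≤ 2 * Real.pi * ∫ x in (0:ℝ)..1, F x
  nlinarith

lemma core (G G1 G2 : ℝ → ℝ)
    (h1 : ∀ x ∈ Ioo (0:ℝ) 1, HasDerivAt G (G1 x) x)
    (h2 : ∀ x ∈ Ioo (0:ℝ) 1, HasDerivAt G1 (G2 x) x) (c K : ℝ) (hc : 0 < c) (hK : 0 < K)
    (hlo' : ∀ x ∈ Ioo (0:ℝ) 1, c ≤ x * (1 - x) * G2 x)
    (hhi' : ∀ x ∈ Ioo (0:ℝ) 1, x * (1 - x) * G2 x ≤ K)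
    (N : ℕ) (hN : 1 ≤ N) (α : ℝ) (ha : 0 < α) (haN : α ≤ (N : ℝ) ^ (-(3:ℝ)/4)) :
    α * ∫ y in (1 / (α * (N:ℝ) ^ ((2:ℝ)/3)))..(1 / α - 1),
            Real.exp (-((N:ℝ) * α) * RPhase G α y)
          ≤ (24 / (c / 8) ^ 3 * Real.exp K) * Real.exp (-(c / 8) * (N:ℝ) ^ ((1:ℝ)/3))
            * Qnorm G N α := by
  have hlo : ∀ x ∈ Ioo (0:ℝ) 1, c / x ≤ G2 x := by
    intro x hx
    have a := hlo' x hx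
    have hx0 := hx.1
    have p : 0 < 1 - x := by linarith [hx.2]
    have : 0 < G2 x := by
      by_contra hh
      have := mul_nonpos_of_nonneg_of_nonpos (mul_pos hx0 p).le (not_lt.1 hh)
      linarith
    rw [div_le_iff₀ hx0]
    nlinarith [mul_pos (mul_pos hx0 hx0) this]
  have hhi : ∀ x ∈ Ioo (0:ℝ) 1, G2 x ≤ K / (x * (1 - x)) := by
    intro x hx
    rw [le_div_iff₀ (mul_pos hx.1 (by linarith [hx.2]))]
    linarith [hhi' x hx]
  have hQ := Q_nonneg G N α
  have hRHS : 0 ≤ (24 / (c / 8) ^ 3 * Real.exp K) * Real.exp (-(c / 8) * (N:ℝ) ^ ((1:ℝ)/3))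
            * Qnorm G N α := by positivity
  have hN1 : (1:ℝ) ≤ N := by exact_mod_cast hN
  have hN0 : (0:ℝ) < N := by linarith
  set h : ℝ := (N:ℝ) ^ (-(2:ℝ)/3) with hh
  have hhinv : (N:ℝ) ^ ((2:ℝ)/3) = h⁻¹ := by
    rw [hh, neg_div, Real.rpow_neg hN0.le, inv_inv]
  have hpos : 0 < h := Real.rpow_pos_of_pos hN0 _
  have hlow : 1 / (α * (N:ℝ) ^ ((2:ℝ)/3)) = h / α := by
    rw [hhinv]; field_simp
  rw [hlow]
  rcases le_or_gt (1 / α - 1) (h / α) with hba | hab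
  · refine le_trans ?_ hRHS
    rw [intervalIntegral.integral_symm]
    have : 0 ≤ ∫ y in (1 / α - 1)..(h / α), Real.exp (-((N:ℝ) * α) * RPhase G α y) :=
      intervalIntegral.integral_nonneg hba fun _ _ => (Real.exp_pos _).le
    nlinarith
  have hsum : α + h < 1 := by
    have := mul_lt_mul_of_pos_left hab ha
    have e1 : α * (h / α) = h := by field_simp
    have e2 : α * (1 / α - 1) = 1 - α := by field_simp
    linarith
  have hN2 : 2 ≤ N := by
    by_contra hcon
    have : N = 1 := by omega
    subst this
    simp at hh
    linarith
  have hN2' : (2:ℝ) ≤ N := by exact_mod_cast hN2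
  have ha35 : α ≤ 3 / 5 := by
    refine haN.trans ?_
    have a1 : (N:ℝ) ^ (-(3:ℝ)/4) ≤ 2 ^ (-(3:ℝ)/4) :=
      Real.rpow_le_rpow_of_nonpos (by norm_num) hN2' (by norm_num)
    refine a1.trans ?_
    have a2 : ((2:ℝ) ^ (-(3:ℝ)/4)) ^ 4 = 1 / 8 := by
      rw [← Real.rpow_natCast, ← Real.rpow_mul (by norm_num)]
      norm_num
    by_contra hcon
    have := pow_lt_pow_left₀ (not_le.1 hcon) (by norm_num) (n := 4) (by norm_num)
    rw [a2] at this
    norm_num at this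
  have hah : α ≤ h := haN.trans (Real.rpow_le_rpow_of_exponent_le hN1 (by norm_num))
  have hNh : (N:ℝ) * h = (N:ℝ) ^ ((1:ℝ)/3) := by
    rw [hh]
    nth_rewrite 1 [← Real.rpow_one (N:ℝ)]
    rw [← Real.rpow_add hN0]
    norm_num
  set z : ℝ := (N:ℝ) ^ ((1:ℝ)/3) with hz
  have hz0 : 0 < z := Real.rpow_pos_of_pos hN0 _
  have hz3 : z ^ 3 = N := by
    rw [hz, ← Real.rpow_natCast, ← Real.rpow_mul hN0.le]
    norm_num
  have hI : ‖∫ y in (h / α)..(1 / α - 1), Real.exp (-((N:ℝ) * α) * RPhase G α y)‖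
      ≤ Real.exp (-(c / 4) * z) * |1 / α - 1 - h / α| := by
    apply intervalIntegral.norm_integral_le_of_norm_le_const_ae
    have hne : ∀ᵐ y : ℝ, y ≠ 1 / α - 1 := by
      simp [MeasureTheory.ae_iff]
    filter_upwards [hne] with y hy hy2
    rw [uIoc_of_le hab.le] at hy2
    have hylt : y < 1 / α - 1 := lt_of_le_of_ne hy2.2 hy
    rw [Real.norm_of_nonneg (Real.exp_pos _).le]
    apply Real.exp_le_exp.2
    unfold RPhase
    set x := α * (1 + y) with hx
    have e1 : α * (h / α) = h := by field_simp
    have e2 : α * (1 / α - 1) = 1 - α := by field_simp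
    have b1 : α + h < x := by
      have := mul_lt_mul_of_pos_left hy2.1 ha
      rw [hx]; linarith
    have b2 : x < 1 := by
      have := mul_lt_mul_of_pos_left hylt ha
      rw [hx]; linarith
    have l := phase_lower G G1 G2 h1 h2 c hc hlo α x ha (by linarith) b2
    have l2 : h / 4 ≤ (x - α) ^ 2 / (2 * x) := by
      rw [le_div_iff₀ (by linarith)]
      nlinarith
    have l3 : c * (h / 4) ≤ Phase G α x := (mul_le_mul_of_nonneg_left l2 hc.le).trans l
    have e3 : -((N:ℝ) * α) * (1 / α * Phase G α x) = -(N * Phase G α x) := by field_simp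
    rw [e3, ← hNh]
    have := mul_le_mul_of_nonneg_left l3 hN0.le
    linarith
  have hI2 : α * ∫ y in (h / α)..(1 / α - 1), Real.exp (-((N:ℝ) * α) * RPhase G α y)
      ≤ Real.exp (-(c / 4) * z) := by
    have := mul_le_mul_of_nonneg_left ((le_abs_self _).trans hI) ha.le
    refine this.trans ?_
    rw [abs_of_pos (by linarith)]
    have e : α * (Real.exp (-(c / 4) * z) * (1 / α - 1 - h / α))
      = Real.exp (-(c / 4) * z) * (1 - α - h) := by field_simp
    rw [e]
    have := Real.exp_pos (-(c / 4) * z)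
    nlinarith
  refine hI2.trans ?_
  have hQl := Q_lower G G1 G2 h1 h2 c K hc hK hlo hhi N hN2 α ha ha35
  refine le_trans ?_ (mul_le_mul_of_nonneg_left hQl (by positivity))
  have ex := Real.pow_div_factorial_le_exp (c / 8 * z) (by positivity) 3
  have e4 : Real.exp (-(c / 4) * z) = Real.exp (-(c / 8) * z) * Real.exp (-(c / 8 * z)) := by
    rw [← Real.exp_add]; ring_nf
  have e5 : 24 / (c / 8) ^ 3 * Real.exp K * Real.exp (-(c / 8) * z) * (Real.exp (-K) / (4 * N))
      = Real.exp (-(c / 8) * z) * ((c / 8 * z) ^ 3 / 6)⁻¹ := by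
    rw [mul_pow, hz3, Real.exp_neg K]
    have := Real.exp_ne_zero K
    field_simp
    norm_num
  rw [e4, e5]
  apply mul_le_mul_of_nonneg_left _ (Real.exp_pos _).le
  rw [Real.exp_neg]
  apply inv_anti₀ (by positivity)
  simpa [Nat.factorial] using ex

lemma GP_d1 (x : ℝ) (hx : x ∈ Ioo (0:ℝ) 1) :
    HasDerivAt GP (Real.log x - Real.log (1 - x)) x := by
  have hx0 : x ≠ 0 := hx.1.ne'
  have hx1 : 1 - x ≠ 0 := by linarith [hx.2]
  have a := (hasDerivAt_id x).mul (Real.hasDerivAt_log hx0)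
  have s := (hasDerivAt_id x).const_sub 1
  have b := s.mul (s.log hx1)
  refine HasDerivAt.congr_deriv (a.add b) ?_
  simp
  field_simp
  ring

lemma GP_d2 (x : ℝ) (hx : x ∈ Ioo (0:ℝ) 1) :
    HasDerivAt (fun x => Real.log x - Real.log (1 - x)) (1 / x + 1 / (1 - x)) x := by
  have hx0 : x ≠ 0 := hx.1.ne'
  have hx1 : 1 - x ≠ 0 := by linarith [hx.2]
  have s := (hasDerivAt_id x).const_sub 1
  refine HasDerivAt.congr_deriv ((Real.hasDerivAt_log hx0).sub (s.log hx1)) ?_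
  simp
  field_simp
  ring

lemma smooth_d1 (f : ℝ → ℝ) (hf : ContDiff ℝ (⊤ : ℕ∞) f) (x : ℝ) :
    HasDerivAt f (deriv f x) x :=
  (hf.differentiable (by simp)).differentiableAt.hasDerivAt

lemma smooth_deriv (f : ℝ → ℝ) (hf : ContDiff ℝ (⊤ : ℕ∞) f) :
    ContDiff ℝ (⊤ : ℕ∞) (deriv f) := (contDiff_infty_iff_deriv.1 hf).2

lemma bounds (f : ℝ → ℝ) (hf : ContDiff ℝ (⊤ : ℕ∞) f)
    (h : ∀ x ∈ Ioo (0:ℝ) 1, 0 < iteratedDeriv 2 (fun x => GP x + f x) x) :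
    ∃ c K : ℝ, 0 < c ∧ 0 < K ∧ ∀ x ∈ Ioo (0:ℝ) 1,
      c ≤ 1 + x * (1 - x) * deriv (deriv f) x ∧ 1 + x * (1 - x) * deriv (deriv f) x ≤ K := by
  have hc2 : Continuous (deriv (deriv f)) := (smooth_deriv _ (smooth_deriv f hf)).continuous
  have hc : ContinuousOn (fun x => 1 + x * (1 - x) * deriv (deriv f) x) (Icc 0 1) := by
    fun_prop
  obtain ⟨a, ha, hmin⟩ := isCompact_Icc.exists_isMinOn (nonempty_Icc.2 zero_le_one) hc
  obtain ⟨b, hb, hmax⟩ := isCompact_Icc.exists_isMaxOn (nonempty_Icc.2 zero_le_one) hc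
  have hpos : ∀ x ∈ Icc (0:ℝ) 1, 0 < 1 + x * (1 - x) * deriv (deriv f) x := by
    intro x hx
    rcases hx.1.eq_or_lt with e | h0
    · subst e; simp
    rcases hx.2.eq_or_lt with e | h1
    · subst e; simp
    have hx' : x ∈ Ioo (0:ℝ) 1 := ⟨h0, h1⟩
    have p := h x hx'
    have e : deriv (fun x => GP x + f x) =ᶠ[nhds x]
        fun x => (Real.log x - Real.log (1 - x)) + deriv f x := by
      filter_upwards [isOpen_Ioo.mem_nhds hx'] with y hy
      exact ((GP_d1 y hy).add (smooth_d1 f hf y)).deriv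
    rw [iteratedDeriv_succ, iteratedDeriv_one, e.deriv_eq] at p
    have dd : deriv (fun x => Real.log x - Real.log (1 - x) + deriv f x) x = _ :=
      ((GP_d2 x hx').add (smooth_d1 _ (smooth_deriv f hf) x)).deriv
    rw [dd] at p
    have q : 0 < 1 - x := by linarith
    have := mul_pos (mul_pos h0 q) p
    have e2 : x * (1 - x) * (1 / x + 1 / (1 - x) + deriv (deriv f) x)
      = 1 + x * (1 - x) * deriv (deriv f) x := by field_simp; ring
    rwa [e2] at this
  exact ⟨_, _, hpos a ha, hpos b hb, fun x hx =>
    ⟨hmin (Ioo_subset_Icc_self hx), hmax (Ioo_subset_Icc_self hx)⟩⟩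

theorem bergman_cp1_boundary_localization
    (f0 f1 : ℝ → ℝ) (hf0 : ContDiff ℝ (⊤ : ℕ∞) f0) (hf1 : ContDiff ℝ (⊤ : ℕ∞) f1)
    (hG0 : ∀ x ∈ Set.Ioo (0:ℝ) 1, 0 < iteratedDeriv 2 (Gt f0 f1 0) x)
    (hG1 : ∀ x ∈ Set.Ioo (0:ℝ) 1, 0 < iteratedDeriv 2 (Gt f0 f1 1) x) :
    ∃ C : ℝ, 0 < C ∧ ∃ δ : ℝ, 0 < δ ∧
      ∀ N : ℕ, 1 ≤ N → ∀ t ∈ Set.Icc (0:ℝ) 1, ∀ α : ℝ,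
        0 < α → α ≤ (N : ℝ) ^ (-(3:ℝ)/4) →
        (α * ∫ y in (1 / (α * (N:ℝ) ^ ((2:ℝ)/3)))..(1 / α - 1),
            Real.exp (-((N:ℝ) * α) * RPhase (Gt f0 f1 t) α y)
          ≤ C * Real.exp (-δ * (N:ℝ) ^ ((1:ℝ)/3)) * Qnorm (Gt f0 f1 t) N α) ∧
        (α * ∫ y in (1 / (α * (N:ℝ) ^ ((2:ℝ)/3)))..(1 / α - 1),
            Real.exp (-((N:ℝ) * α) * RPhase GP α y)
          ≤ C * Real.exp (-δ * (N:ℝ) ^ ((1:ℝ)/3)) * Qnorm GP N α) := by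
  obtain ⟨c0, K0, hc0, hK0, hb0⟩ := bounds f0 hf0 (by
    have e : Gt f0 f1 0 = fun x => GP x + f0 x := by funext x; simp [Gt]
    rwa [e] at hG0)
  obtain ⟨c1, K1, hc1, hK1, hb1⟩ := bounds f1 hf1 (by
    have e : Gt f0 f1 1 = fun x => GP x + f1 x := by funext x; simp [Gt]
    rwa [e] at hG1)
  set c := min 1 (min c0 c1) with hc
  set K := max 1 (max K0 K1) with hK
  have cpos : 0 < c := by rw [hc]; positivity
  have Kpos : 0 < K := lt_of_lt_of_le one_pos (le_max_left _ _)
  have cc1 : c ≤ 1 := min_le_left _ _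
  have cc2 : c ≤ c0 := (min_le_right _ _).trans (min_le_left _ _)
  have cc3 : c ≤ c1 := (min_le_right _ _).trans (min_le_right _ _)
  have kk1 : 1 ≤ K := le_max_left _ _
  have kk2 : K0 ≤ K := (le_max_left _ _).trans (le_max_right _ _)
  have kk3 : K1 ≤ K := (le_max_right _ _).trans (le_max_right _ _)
  refine ⟨24 / (c / 8) ^ 3 * Real.exp K, by positivity, c / 8, by positivity, ?_⟩
  intro N hN t ht α ha haN
  constructor
  · have e : ∀ x ∈ Ioo (0:ℝ) 1, x * (1 - x) * ((1 / x + 1 / (1 - x)) +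
        ((1 - t) * deriv (deriv f0) x + t * deriv (deriv f1) x))
        = (1 - t) * (1 + x * (1 - x) * deriv (deriv f0) x)
          + t * (1 + x * (1 - x) * deriv (deriv f1) x) := by
      intro x hx
      have p : x ≠ 0 := hx.1.ne'
      have q : 1 - x ≠ 0 := by linarith [hx.2]
      field_simp
      ring
    have t0 := ht.1
    have t1 : 0 ≤ 1 - t := by linarith [ht.2]
    refine core (Gt f0 f1 t)
      (fun x => (Real.log x - Real.log (1 - x)) + ((1 - t) * deriv f0 x + t * deriv f1 x))
      (fun x => (1 / x + 1 / (1 - x)) +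
        ((1 - t) * deriv (deriv f0) x + t * deriv (deriv f1) x)) ?_ ?_ c K cpos Kpos ?_ ?_
      N hN α ha haN
    · intro x hx
      exact (GP_d1 x hx).add (((smooth_d1 f0 hf0 x).const_mul _).add
        ((smooth_d1 f1 hf1 x).const_mul _))
    · intro x hx
      exact (GP_d2 x hx).add (((smooth_d1 _ (smooth_deriv f0 hf0) x).const_mul _).add
        ((smooth_d1 _ (smooth_deriv f1 hf1) x).const_mul _))
    · intro x hx
      rw [e x hx]
      have u := mul_le_mul_of_nonneg_left (cc2.trans (hb0 x hx).1) t1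
      have v := mul_le_mul_of_nonneg_left (cc3.trans (hb1 x hx).1) t0
      linarith
    · intro x hx
      rw [e x hx]
      have u := mul_le_mul_of_nonneg_left ((hb0 x hx).2.trans kk2) t1
      have v := mul_le_mul_of_nonneg_left ((hb1 x hx).2.trans kk3) t0
      linarith
  · have e : ∀ x ∈ Ioo (0:ℝ) 1, x * (1 - x) * (1 / x + 1 / (1 - x)) = 1 := by
      intro x hx
      have p : x ≠ 0 := hx.1.ne'
      have q : 1 - x ≠ 0 := by linarith [hx.2]
      field_simp
      ring
    exact core GP _ _ GP_d1 GP_d2 c K cpos Kpos (fun x hx => by rw [e x hx]; exact cc1)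
      (fun x hx => by rw [e x hx]; exact kk1) N hN α ha haN
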